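/- arXiv:1510.06819 — 2 statements merged into one kernel-verified Lean document; each statement's English description precedes it below -/
import Mathlib

section
/- Let h : ℝⁿ → ℝⁿ be a bi-Lipschitz homeomorphism with h(0) = 0, let A ⊆ ℝⁿ with 0 ∈ closure(A), set B := h(A), and suppose both A and B satisfy condition (SSP) at 0. Let (n_i) be a strictly increasing sequence of positive integers and g : ℝⁿ → ℝⁿ a map such that n_i·h(x/n_i) → g(x) for every x ∈ ℝⁿ. Then g restricts to a bijection of tangent cones: g(LD(A)) = LD(B). -/
/-!
For positive scales `r i → ∞`, a nonzero limit of `r i • c i` with `c i ∈ A` lies in the tangent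
cone of `A` (`mem_LD_of_tendsto`); under (SSP) every nonzero vector of the tangent cone is such a
limit, for any prescribed scales (`SSP.exists_tendsto`). With the scales `n_i`, the Lipschitz bound
gives: if `n_i c_i → v` with `c_i ∈ A`, then `n_i h(c_i) → g(v)`, and the points `h(c_i)` lie in
`h(A)`; this yields `g(LD A) ⊆ LD(h(A))`. Conversely, a nonzero `w ∈ LD(h(A))` is a limit of
`n_i h(c_i)` with `c_i ∈ A`. The points `n_i c_i` are bounded by the lower Lipschitz bound, so a
subsequence converges to some `v`; then `g(v) = w`, and `v ∈ LD A` because `v ≠ 0`.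
The vector `0` belongs to a tangent cone exactly when there is at least one direction, and the
directions of `A` and of `h(A)` exist or fail to exist together.
-/

open Filter Topology Set

/-- The direction set `D(A)` of a set-germ `A` at `0`: unit vectors arising as limits of
`x_i / ‖x_i‖` for sequences `x_i ∈ A \ {0}` tending to `0`. -/
def dirSet {E : Type*} [NormedAddCommGroup E] [NormedSpace ℝ E] (A : Set E) : Set E :=
  {a | ‖a‖ = 1 ∧ ∃ x : ℕ → E, (∀ i, x i ∈ A \ {0}) ∧
    Tendsto x atTop (𝓝 0) ∧ Tendsto (fun i => (‖x i‖)⁻¹ • x i) atTop (𝓝 a)}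

/-- Condition (SSP): for every sequence of nonzero points `a_m → 0` whose normalizations
converge to a direction of `A`, there is a sequence `b_m ∈ A` with `‖a_m - b_m‖/‖a_m‖ → 0`. -/
def SSP {E : Type*} [NormedAddCommGroup E] [NormedSpace ℝ E] (A : Set E) : Prop :=
  ∀ a : ℕ → E, (∀ m, a m ≠ 0) → Tendsto a atTop (𝓝 0) →
    (∃ v ∈ dirSet A, Tendsto (fun m => (‖a m‖)⁻¹ • a m) atTop (𝓝 v)) →
    ∃ b : ℕ → E, (∀ m, b m ∈ A) ∧
      Tendsto (fun m => ‖a m - b m‖ / ‖a m‖) atTop (𝓝 0)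

/-- The half-cone `L(E)` over a set of directions. -/
def halfCone {E : Type*} [NormedAddCommGroup E] [NormedSpace ℝ E] (S : Set E) : Set E :=
  {x | ∃ a ∈ S, ∃ t : ℝ, 0 ≤ t ∧ x = t • a}

/-- The (real) tangent cone `LD(A) = L(D(A))` of `A` at `0`. -/
def LD {E : Type*} [NormedAddCommGroup E] [NormedSpace ℝ E] (A : Set E) : Set E :=
  halfCone (dirSet A)

section TangentCone

variable {E : Type*} [NormedAddCommGroup E] [NormedSpace ℝ E]

theorem dirSet_subset_LD (A : Set E) : dirSet A ⊆ LD A :=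
  fun a ha => ⟨a, ha, 1, zero_le_one, (one_smul ℝ a).symm⟩

theorem ne_zero_of_mem_dirSet {A : Set E} {a : E} (ha : a ∈ dirSet A) : a ≠ 0 := by
  rintro rfl
  simpa using ha.1

theorem zero_mem_LD_of_mem {A : Set E} {v : E} (hv : v ∈ LD A) : (0 : E) ∈ LD A := by
  obtain ⟨a, ha, -⟩ := hv
  exact ⟨a, ha, 0, le_rfl, (zero_smul ℝ a).symm⟩

/-- Nonzero limits of points of `A` magnified by scales tending to infinity are tangent to `A`. -/
theorem mem_LD_of_tendsto {A : Set E} {r : ℕ → ℝ} (hr : ∀ i, 0 < r i)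
    (hr' : Tendsto r atTop atTop) {c : ℕ → E} (hc : ∀ i, c i ∈ A) {v : E} (hv : v ≠ 0)
    (hlim : Tendsto (fun i => r i • c i) atTop (𝓝 v)) : v ∈ LD A := by
  have hc0 : Tendsto c atTop (𝓝 0) := by
    have := (tendsto_inv_atTop_zero.comp hr').smul hlim
    rw [zero_smul] at this
    refine this.congr fun i => ?_
    simp [smul_smul, inv_mul_cancel₀ (hr i).ne']
  have hdir : Tendsto (fun i => ‖c i‖⁻¹ • c i) atTop (𝓝 (‖v‖⁻¹ • v)) := by
    refine ((hlim.norm.inv₀ (norm_ne_zero_iff.2 hv)).smul hlim).congr fun i => ?_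
    rw [norm_smul, Real.norm_of_nonneg (hr i).le, smul_smul, mul_inv, mul_right_comm,
      inv_mul_cancel₀ (hr i).ne', one_mul]
  obtain ⟨N, hN⟩ := eventually_atTop.1 (hlim.eventually_ne hv)
  refine ⟨‖v‖⁻¹ • v, ⟨norm_smul_inv_norm (𝕜 := ℝ) hv, fun i => c (i + N), fun i => ⟨hc _, ?_⟩,
    hc0.comp (tendsto_add_atTop_nat N), hdir.comp (tendsto_add_atTop_nat N)⟩, ‖v‖,
    norm_nonneg v, ?_⟩
  · intro h0
    apply hN (i + N) (Nat.le_add_left _ _)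
    rw [show c (i + N) = 0 from h0, smul_zero]
  · rw [smul_smul, mul_inv_cancel₀ (norm_ne_zero_iff.2 hv), one_smul]

/-- Under (SSP), a nonzero tangent vector is approximated by points of `A` along every sequence
of scales: (SSP) is applied to the points `(r i)⁻¹ • v` of the ray through `v`. -/
theorem SSP.exists_tendsto {A : Set E} (hA : SSP A) {r : ℕ → ℝ} (hr : ∀ i, 0 < r i)
    (hr' : Tendsto r atTop atTop) {v : E} (hvA : v ∈ LD A) (hv : v ≠ 0) :
    ∃ c : ℕ → E, (∀ i, c i ∈ A) ∧ Tendsto (fun i => r i • c i) atTop (𝓝 v) := by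
  obtain ⟨a, ha, t, ht, rfl⟩ := hvA
  have ht0 : 0 < t := ht.lt_of_ne fun h => hv (by rw [← h, zero_smul])
  have h1 : ‖a‖ = 1 := ha.1
  have hnorm : ∀ i, ‖(r i)⁻¹ • t • a‖ = (r i)⁻¹ * t := fun i => by
    rw [norm_smul, norm_smul, h1, mul_one, Real.norm_of_nonneg ht,
      Real.norm_of_nonneg (inv_pos.2 (hr i)).le]
  obtain ⟨b, hb, hlim⟩ := hA (fun i => (r i)⁻¹ • t • a)
    (fun i => smul_ne_zero (inv_pos.2 (hr i)).ne' hv)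
    (by simpa using (tendsto_inv_atTop_zero.comp hr').smul_const (t • a))
    ⟨a, ha, tendsto_const_nhds.congr fun i => by
      have := (hr i).ne'
      have := ht0.ne'
      rw [hnorm, smul_smul, smul_smul]
      field_simp
      simp⟩
  refine ⟨b, hb, tendsto_iff_norm_sub_tendsto_zero.2 ?_⟩
  have := hlim.const_mul t
  rw [mul_zero] at this
  refine this.congr fun i => ?_
  have hi := (hr i).ne'
  have : r i • b i - t • a = -(r i • ((r i)⁻¹ • t • a - b i)) := by
    rw [smul_sub, smul_inv_smul₀ hi, neg_sub]
  rw [hnorm, this, norm_neg, norm_smul, Real.norm_of_nonneg (hr i).le]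
  have := ht0.ne'
  field_simp

/-- The rescalings `x ↦ r h(x / r)` of an `L`-Lipschitz map are equi-Lipschitz, so they may be
evaluated at points `r i • c i → v` instead of at `v` itself without changing the limit. -/
theorem tendsto_rescale_sub {h : E → E} {L : ℝ} (hlip : ∀ x y, ‖h x - h y‖ ≤ L * ‖x - y‖)
    {r : ℕ → ℝ} (hr : ∀ i, 0 < r i) {c : ℕ → E} {v : E}
    (hlim : Tendsto (fun i => r i • c i) atTop (𝓝 v)) :
    Tendsto (fun i => r i • h (c i) - r i • h ((r i)⁻¹ • v)) atTop (𝓝 0) := by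
  have := (tendsto_iff_norm_sub_tendsto_zero.1 hlim).const_mul L
  rw [mul_zero] at this
  refine squeeze_zero_norm (fun i => ?_) this
  have hi : r i • c i - v = r i • (c i - (r i)⁻¹ • v) := by
    rw [smul_sub, smul_inv_smul₀ (hr i).ne']
  rw [← smul_sub, hi, norm_smul, norm_smul, Real.norm_of_nonneg (hr i).le]
  calc r i * ‖h (c i) - h ((r i)⁻¹ • v)‖ ≤ r i * (L * ‖c i - (r i)⁻¹ • v‖) :=
        mul_le_mul_of_nonneg_left (hlip _ _) (hr i).le
    _ = L * (r i * ‖c i - (r i)⁻¹ • v‖) := by ring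

end TangentCone

/-- if `h` is a bi-Lipschitz homeomorphism of `ℝⁿ` fixing `0`, `B = h(A)`,
both `A` and `B` satisfy (SSP) at `0`, and `g` is a pointwise limit of rescalings
`x ↦ n_i·h(x/n_i)` along a subsequence, then `g(LD(A)) = LD(B)`. -/
theorem image_LD_eq_LD_image {n : ℕ} (A : Set (EuclideanSpace ℝ (Fin n)))
    (hA : (0 : EuclideanSpace ℝ (Fin n)) ∈ closure A)
    (h : EuclideanSpace ℝ (Fin n) → EuclideanSpace ℝ (Fin n))
    (L : ℝ) (hL : 1 ≤ L) (h0 : h 0 = 0) (hsurj : Function.Surjective h)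
    (hbil : ∀ x y, (1 / L) * ‖x - y‖ ≤ ‖h x - h y‖ ∧ ‖h x - h y‖ ≤ L * ‖x - y‖)
    (hsspA : SSP A) (hsspB : SSP (h '' A))
    (ni : ℕ → ℕ) (hni : StrictMono ni) (hnipos : ∀ i, 0 < ni i)
    (g : EuclideanSpace ℝ (Fin n) → EuclideanSpace ℝ (Fin n))
    (hg : ∀ x, Tendsto (fun i => (ni i : ℝ) • h ((ni i : ℝ)⁻¹ • x)) atTop (𝓝 (g x))) :
    g '' LD A = LD (h '' A) := by
  have hr : ∀ i, (0 : ℝ) < ni i := fun i => by exact_mod_cast hnipos i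
  have hr' : Tendsto (fun i => (ni i : ℝ)) atTop atTop :=
    tendsto_natCast_atTop_atTop.comp hni.tendsto_atTop
  have hL0 : 0 < L := by linarith
  have hlip : ∀ x y, ‖h x - h y‖ ≤ L * ‖x - y‖ := fun x y => (hbil x y).2
  have hlow : ∀ x, ‖x‖ ≤ L * ‖h x‖ := fun x => by
    have := (hbil x 0).1
    rw [h0, sub_zero, sub_zero, one_div] at this
    exact (inv_mul_le_iff₀ hL0).1 this
  have hg0 : g 0 = 0 := by
    refine tendsto_nhds_unique (hg 0) ?_
    simp [h0]
  have hgne : ∀ v, v ≠ 0 → g v ≠ 0 := by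
    intro v hv hgv
    have hle : ‖v‖ ≤ L * ‖g v‖ := by
      refine ge_of_tendsto' ((hg v).norm.const_mul L) fun i => ?_
      have h2 := mul_le_mul_of_nonneg_left (hlow ((ni i : ℝ)⁻¹ • v)) (hr i).le
      rw [norm_smul, norm_inv, Real.norm_of_nonneg (hr i).le,
        mul_inv_cancel_left₀ (hr i).ne'] at h2
      rw [norm_smul, Real.norm_of_nonneg (hr i).le]
      linarith
    rw [hgv, norm_zero, mul_zero] at hle
    exact hv (norm_le_zero_iff.1 hle)
  have hfwd : ∀ v ∈ LD A, v ≠ 0 → g v ∈ LD (h '' A) := by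
    intro v hvA hv
    obtain ⟨c, hc, hlim⟩ := hsspA.exists_tendsto hr hr' hvA hv
    refine mem_LD_of_tendsto hr hr' (c := fun i => h (c i)) (fun i => mem_image_of_mem h (hc i))
      (hgne v hv) ?_
    simpa using (tendsto_rescale_sub hlip hr hlim).add (hg v)
  have hbwd : ∀ w ∈ LD (h '' A), w ≠ 0 → ∃ v ∈ LD A, g v = w := by
    intro w hwB hw
    obtain ⟨b, hb, hlim⟩ := hsspB.exists_tendsto hr hr' hwB hw
    choose c hc hcb using hb
    obtain ⟨M, hM⟩ := hlim.norm.bddAbove_range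
    have hbd : ∀ i, (ni i : ℝ) • c i ∈ Metric.closedBall 0 (L * M) := by
      intro i
      have h1 : ‖(ni i : ℝ) • b i‖ ≤ M := hM ⟨i, rfl⟩
      rw [norm_smul, ← hcb, Real.norm_of_nonneg (hr i).le] at h1
      rw [mem_closedBall_zero_iff, norm_smul, Real.norm_of_nonneg (hr i).le]
      calc (ni i : ℝ) * ‖c i‖ ≤ ni i * (L * ‖h (c i)‖) :=
            mul_le_mul_of_nonneg_left (hlow _) (hr i).le
        _ = L * (ni i * ‖h (c i)‖) := by ring
        _ ≤ L * M := mul_le_mul_of_nonneg_left h1 hL0.le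
    obtain ⟨v, -, φ, hφ, hv⟩ := (isCompact_closedBall _ _).tendsto_subseq hbd
    have hgv : g v = w := by
      have h1 := tendsto_rescale_sub hlip (fun i => hr (φ i)) (c := c ∘ φ) hv
      have h2 := (hlim.comp hφ.tendsto_atTop).sub h1
      rw [sub_zero] at h2
      refine tendsto_nhds_unique ((hg v).comp hφ.tendsto_atTop) (h2.congr fun i => ?_)
      simp [hcb]
    have hv0 : v ≠ 0 := by
      rintro rfl
      exact hw (hgv.symm.trans hg0)
    exact ⟨v, mem_LD_of_tendsto (fun i => hr (φ i)) (hr'.comp hφ.tendsto_atTop)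
      (fun i => hc (φ i)) hv0 hv, hgv⟩
  apply Subset.antisymm
  · rintro _ ⟨v, hvA, rfl⟩
    by_cases hv : v = 0
    · obtain ⟨a, ha, -⟩ := hvA
      rw [hv, hg0]
      exact zero_mem_LD_of_mem (hfwd a (dirSet_subset_LD A ha) (ne_zero_of_mem_dirSet ha))
    · exact hfwd v hvA hv
  · intro w hwB
    by_cases hw : w = 0
    · obtain ⟨b, hb, -⟩ := hwB
      obtain ⟨v, hv, -⟩ := hbwd b (dirSet_subset_LD _ hb) (ne_zero_of_mem_dirSet hb)
      exact ⟨0, zero_mem_LD_of_mem hv, hg0.trans hw.symm⟩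
    · exact hbwd w hwB hw
end

section
/- Let A, B ⊆ ℝⁿ with 0 ∈ closure(A) ∩ closure(B), and let h : ℝⁿ → ℝⁿ be a bi-Lipschitz homeomorphism with h(0) = 0. Suppose that all four sets A, B, h(A), h(B) satisfy condition (SSP) at 0. Then dim_H(D(h(A)) ∩ D(h(B))) = dim_H(D(A) ∩ D(B)), where dim_H denotes Hausdorff dimension. -/
/-!
The proof transports tangent cones by a blow-up of `h` and compares a set of directions with the
cone over it, whose Hausdorff dimension is larger by exactly one.

*Blow-up.* The rescalings `x ↦ (m + 1) • h (x / (m + 1))` are uniformly bi-Lipschitz, so along an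
ultrafilter they converge pointwise to a bi-Lipschitz map `G` (`exists_blowup`). If `A` satisfies
(SSP), every point `t • v` of its tangent cone is approximated by points of `A`, at scale
`1 / (m + 1)` and up to `o(1 / m)`, for all `m`; hence `G` maps the tangent cone of `A` into that of
`h '' A` (`normalize_mem_dirSet_image`). The map `G` is the same for `A` and `B`, so it sends the
cone over `D(A) ∩ D(B)` into the cone over `D(h(A)) ∩ D(h(B))`.

*Cones.* `G` is not homogeneous and does not act on directions, so dimensions are compared through
the cones. For a set `S` of unit vectors and `s > 0`, `μH[s] S = 0` implies that the cone over `S`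
is `μH[s + 1]`-null (`null_truncated_cone`, and a countable union), and the converse holds already for the part of the cone
with radii in `[1, 2]` (`null_of_null_annular_cone`, by Fubini in the radius).

Together these give `dim (D(A) ∩ D(B)) ≤ dim (D(h(A)) ∩ D(h(B)))` (`dimH_dirSet_inter_le`); the
reverse inequality is the same statement for `h⁻¹` and the sets `h '' A`, `h '' B`.
-/

open Filter Topology Set

/-! ### Null sets for Hausdorff measure and cones -/

open MeasureTheory Measure in
/-- Hausdorff-null sets have countable covers of small total `s`-weight, with positive real radii
so that one may divide by them. -/
theorem exists_cover_of_null {X : Type*} [MetricSpace X] [MeasurableSpace X] [BorelSpace X]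
    {s : ℝ} (hs : 0 < s) {E : Set X} (hE : μH[s] E = 0) {ε : ENNReal} (hε : 0 < ε) :
    ∃ (U : ℕ → Set X) (δ : ℕ → ℝ), (∀ i, 0 < δ i) ∧
      (∀ i, ∀ x ∈ U i, ∀ y ∈ U i, dist x y ≤ δ i) ∧ E ⊆ ⋃ i, U i ∧
      ∑' i, ENNReal.ofReal (δ i ^ s) ≤ ε := by
  have hε2 : 0 < ε / 2 := ENNReal.half_pos hε.ne'
  rw [hausdorffMeasure_apply] at hE
  have h1 := le_iSup₂ (f := fun (r : ENNReal) (_ : 0 < r) =>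
        ⨅ (t : ℕ → Set X) (_ : E ⊆ ⋃ n, t n) (_ : ∀ n, Metric.ediam (t n) ≤ r),
          ∑' n, ⨆ _ : (t n).Nonempty, Metric.ediam (t n) ^ s) 1 one_pos
  rw [hE] at h1
  have h2 := lt_of_le_of_lt h1 hε2
  simp only [iInf_lt_iff] at h2
  obtain ⟨U, hU, hd, hsum⟩ := h2
  -- The slack `e i` makes the radii positive even where `U i` has at most one point.
  obtain ⟨e, he, hesum⟩ := ENNReal.exists_pos_sum_of_countable hε2.ne' ℕ
  refine ⟨U, fun i => ((Metric.ediam (U i)).toReal ^ s + e i) ^ (1 / s), fun i => ?_,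
    fun i x hx y hy => ?_, hU, ?_⟩
  · have := he i
    positivity
  · have hfin : Metric.ediam (U i) ≠ ⊤ := ((hd i).trans_lt ENNReal.one_lt_top).ne
    have h3 : dist x y ≤ (Metric.ediam (U i)).toReal := by
      rw [dist_edist]
      exact ENNReal.toReal_mono hfin (Metric.edist_le_ediam_of_mem hx hy)
    refine h3.trans ?_
    calc (Metric.ediam (U i)).toReal
        = ((Metric.ediam (U i)).toReal ^ s) ^ (1 / s) := by
          rw [← Real.rpow_mul ENNReal.toReal_nonneg, mul_one_div_cancel hs.ne', Real.rpow_one]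
      _ ≤ _ := by
          apply Real.rpow_le_rpow (by positivity) _ (by positivity)
          simp
  · calc ∑' i, ENNReal.ofReal ((((Metric.ediam (U i)).toReal ^ s + e i) ^ (1 / s)) ^ s)
        ≤ ∑' i, ((⨆ _ : (U i).Nonempty, Metric.ediam (U i) ^ s) + (e i : ENNReal)) := by
          refine ENNReal.tsum_le_tsum fun i => ?_
          have hfin : Metric.ediam (U i) ≠ ⊤ := ((hd i).trans_lt ENNReal.one_lt_top).ne
          rw [← Real.rpow_mul (by positivity), one_div_mul_cancel hs.ne', Real.rpow_one,
            ENNReal.ofReal_add (by positivity) (e i).coe_nonneg, ENNReal.ofReal_coe_nnreal]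
          gcongr
          rcases (U i).eq_empty_or_nonempty with h | h
          · simp [h, Real.zero_rpow hs.ne']
          · rw [← ENNReal.ofReal_rpow_of_nonneg ENNReal.toReal_nonneg hs.le,
              ENNReal.ofReal_toReal hfin]
            exact le_iSup (fun _ : (U i).Nonempty => Metric.ediam (U i) ^ s) h
      _ ≤ ε := by
          rw [ENNReal.tsum_add]
          calc _ ≤ ε / 2 + ε / 2 := add_le_add hsum.le hesum.le
            _ = ε := ENNReal.add_halves ε

open MeasureTheory Measure in
/-- Smallness of the individual diameters need not be assumed: it follows from smallness of the
total `s`-weight, as `s > 0`. -/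
theorem null_of_exists_cover {X : Type*} [MetricSpace X] [MeasurableSpace X] [BorelSpace X]
    {s : ℝ} (hs : 0 < s) {E : Set X}
    (H : ∀ ε : ENNReal, 0 < ε → ∃ (ι : Type) (_ : Countable ι) (U : ι → Set X) (δ : ι → ℝ),
      (∀ i, 0 < δ i) ∧ (∀ i, ∀ x ∈ U i, ∀ y ∈ U i, dist x y ≤ δ i) ∧ E ⊆ ⋃ i, U i ∧
      ∑' i, ENNReal.ofReal (δ i ^ s) ≤ ε) : μH[s] E = 0 := by
  have H' := fun n : ℕ => H ((n : ENNReal)⁻¹) (by simp)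
  choose ι hι U δ hδ hU hE hsum using H'
  have hdiam : ∀ n i, Metric.ediam (U n i) ≤ ENNReal.ofReal (δ n i) := fun n i =>
    Metric.ediam_le fun x hx y hy => by
      rw [edist_dist]; exact ENNReal.ofReal_le_ofReal (hU n i x hx y hy)
  have hpow : ∀ n i, ENNReal.ofReal (δ n i) ^ s = ENNReal.ofReal (δ n i ^ s) := fun n i =>
    ENNReal.ofReal_rpow_of_nonneg (hδ n i).le hs.le
  have hlim : Tendsto (fun n : ℕ => ((n : ENNReal)⁻¹) ^ (1 / s)) atTop (𝓝 0) := by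
    have h := ((ENNReal.continuous_rpow_const (y := 1 / s)).tendsto 0).comp
      ENNReal.tendsto_inv_nat_nhds_zero
    rwa [ENNReal.zero_rpow_of_pos (by positivity)] at h
  have hle := hausdorffMeasure_le_liminf_tsum s E _ hlim U
    (Eventually.of_forall fun n i => by
      have h1 : Metric.ediam (U n i) ^ s ≤ (n : ENNReal)⁻¹ :=
        (ENNReal.rpow_le_rpow (hdiam n i) hs.le).trans <| by
          rw [hpow]; exact (ENNReal.le_tsum i).trans (hsum n)
      have h2 := ENNReal.rpow_le_rpow h1 (z := 1 / s) (by positivity)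
      rwa [← ENNReal.rpow_mul, mul_one_div_cancel hs.ne', ENNReal.rpow_one] at h2)
    (Eventually.of_forall hE)
  refine le_antisymm (hle.trans ?_) zero_le
  calc liminf (fun n => ∑' i, Metric.ediam (U n i) ^ s) atTop
      ≤ liminf (fun n : ℕ => (n : ENNReal)⁻¹) atTop := by
        refine liminf_le_liminf (Eventually.of_forall fun n => ?_)
        refine (ENNReal.tsum_le_tsum fun i => ?_).trans (hsum n)
        rw [← hpow]
        exact ENNReal.rpow_le_rpow (hdiam n i) hs.le
    _ = 0 := ENNReal.tendsto_inv_nat_nhds_zero.liminf_eq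

open MeasureTheory Measure in
/-- Coning over a bounded range of radii raises Hausdorff dimension by at most one: a set of
directions of diameter `δ` spans a truncated cone covered by about `R / δ` pieces of diameter
comparable to `δ`. -/
theorem null_truncated_cone {E : Type*} [NormedAddCommGroup E] [NormedSpace ℝ E]
    [MeasurableSpace E] [BorelSpace E] {s : ℝ} (hs : 0 < s) {S : Set E}
    (hS1 : ∀ v ∈ S, ‖v‖ = 1) (hS : μH[s] S = 0) {R : ℝ} (hR : 0 ≤ R) :
    μH[s + 1] {x : E | ∃ v ∈ S, ∃ r : ℝ, 0 ≤ r ∧ r ≤ R ∧ x = r • v} = 0 := by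
  refine null_of_exists_cover (by positivity) fun ε hε => ?_
  set C : ℝ := (R + 1) ^ (s + 1) * (R + 1) with hC
  have hCpos : 0 < C := by positivity
  -- The bound by `1` forces every radius `δ i` to be at most `1`.
  set η : ENNReal := min 1 (ε / ENNReal.ofReal C) with hη
  have hηpos : 0 < η := lt_min one_pos (ENNReal.div_pos hε.ne' ENNReal.ofReal_ne_top)
  obtain ⟨U, δ, hδ, hU, hcov, hsum⟩ := exists_cover_of_null hs hS hηpos
  have hδ1 : ∀ i, δ i ≤ 1 := fun i => by
    by_contra! h
    have h1 : ENNReal.ofReal (δ i ^ s) ≤ 1 :=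
      (ENNReal.le_tsum i).trans (hsum.trans (min_le_left _ _))
    have h2 := Real.one_lt_rpow h hs
    rw [ENNReal.ofReal_le_one] at h1
    linarith
  refine ⟨Σ i : ℕ, Fin (⌊R / δ i⌋₊ + 1), inferInstance,
    fun p => {x | ∃ v ∈ S ∩ U p.1, ∃ r : ℝ, 0 ≤ r ∧ r ≤ R ∧ ⌊r / δ p.1⌋₊ = (p.2 : ℕ) ∧ x = r • v},
    fun p => (R + 1) * δ p.1, fun p => by have := hδ p.1; positivity, ?_, ?_, ?_⟩
  · rintro ⟨i, k⟩ x ⟨v, ⟨hv, hvU⟩, r, hr0, hrR, hrk, rfl⟩ y ⟨w, ⟨hw, hwU⟩, q, hq0, hqR, hqk, rfl⟩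
    simp only at *
    have hvw := hU i v hvU w hwU
    have hd := hδ i
    have hr1 := Nat.floor_le (a := r / δ i) (by positivity)
    have hr2 := Nat.lt_floor_add_one (r / δ i)
    have hq1 := Nat.floor_le (a := q / δ i) (by positivity)
    have hq2 := Nat.lt_floor_add_one (q / δ i)
    rw [hrk] at hr1 hr2
    rw [hqk] at hq1 hq2
    rw [le_div_iff₀ hd] at hr1 hq1
    rw [div_lt_iff₀ hd] at hr2 hq2
    have hrq : |r - q| ≤ δ i := by
      rw [abs_le]; constructor <;> nlinarith
    rw [dist_eq_norm] at hvw ⊢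
    have hdec : r • v - q • w = r • (v - w) + (r - q) • w := by
      rw [smul_sub, sub_smul]; abel
    rw [hdec]
    calc ‖r • (v - w) + (r - q) • w‖ ≤ r * ‖v - w‖ + |r - q| * ‖w‖ := by
          refine (norm_add_le _ _).trans ?_
          rw [norm_smul, norm_smul, Real.norm_eq_abs, Real.norm_eq_abs, abs_of_nonneg hr0]
      _ ≤ R * δ i + δ i * 1 := by
          rw [hS1 w hw]
          gcongr
      _ = (R + 1) * δ i := by ring
  · rintro x ⟨v, hv, r, hr0, hrR, rfl⟩
    obtain ⟨i, hi⟩ := mem_iUnion.1 (hcov hv)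
    have hd := hδ i
    refine mem_iUnion.2 ⟨⟨i, ⟨⌊r / δ i⌋₊, Nat.lt_succ_of_le (Nat.floor_mono (by gcongr))⟩⟩, ?_⟩
    exact ⟨v, ⟨hv, hi⟩, r, hr0, hrR, rfl, rfl⟩
  · rw [ENNReal.tsum_sigma']
    calc ∑' (i : ℕ) (_ : Fin (⌊R / δ i⌋₊ + 1)), ENNReal.ofReal (((R + 1) * δ i) ^ (s + 1))
        ≤ ∑' i, ENNReal.ofReal C * ENNReal.ofReal (δ i ^ s) := by
          refine ENNReal.tsum_le_tsum fun i => ?_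
          have hd := hδ i
          rw [tsum_fintype, Finset.sum_const, Finset.card_univ, Fintype.card_fin, nsmul_eq_mul,
            ← ENNReal.ofReal_natCast, ← ENNReal.ofReal_mul (by positivity),
            ← ENNReal.ofReal_mul hCpos.le]
          apply ENNReal.ofReal_le_ofReal
          have hN : ((⌊R / δ i⌋₊ + 1 : ℕ) : ℝ) * δ i ≤ R + 1 := by
            have h1 := Nat.floor_le (a := R / δ i) (by positivity)
            rw [le_div_iff₀ hd] at h1
            push_cast
            nlinarith [hδ1 i]
          rw [Real.mul_rpow (by positivity) hd.le, Real.rpow_add_one hd.ne']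
          calc ((⌊R / δ i⌋₊ + 1 : ℕ) : ℝ) * ((R + 1) ^ (s + 1) * (δ i ^ s * δ i))
              = (R + 1) ^ (s + 1) * δ i ^ s * (((⌊R / δ i⌋₊ + 1 : ℕ) : ℝ) * δ i) := by ring
            _ ≤ (R + 1) ^ (s + 1) * δ i ^ s * (R + 1) := by gcongr
            _ = C * δ i ^ s := by rw [hC]; ring
      _ = ENNReal.ofReal C * ∑' i, ENNReal.ofReal (δ i ^ s) := ENNReal.tsum_mul_left
      _ ≤ ENNReal.ofReal C * (ε / ENNReal.ofReal C) := by
          gcongr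
          exact hsum.trans (min_le_right _ _)
      _ ≤ ε := ENNReal.mul_div_le

open MeasureTheory Measure in
/-- Coning raises Hausdorff dimension by at least one. Given a cover of the annular cone by sets
`U i` of diameter `δ i`, the spheres of radius `t` meeting `U i` fill a set of radii of length at
most `2 δ i`, so averaging `∑ δ i ^ s` (over the `i` with `U i` meeting the sphere of radius `t`)
in `t ∈ [1, 2]` is bounded by `2 ∑ δ i ^ (s + 1)`; a good radius `t` gives a cover of `S`. -/
theorem null_of_null_annular_cone {E : Type*} [NormedAddCommGroup E] [NormedSpace ℝ E]
    [MeasurableSpace E] [BorelSpace E] {s : ℝ} (hs : 0 < s) {S : Set E}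
    (hS1 : ∀ v ∈ S, ‖v‖ = 1)
    (hS : μH[s + 1] {x : E | ∃ v ∈ S, ∃ t : ℝ, 1 ≤ t ∧ t ≤ 2 ∧ x = t • v} = 0) :
    μH[s] S = 0 := by
  refine null_of_exists_cover hs fun ε hε => ?_
  have hε2 : 0 < ε / 2 := ENNReal.half_pos hε.ne'
  obtain ⟨U, δ, hδ, hU, hcov, hsum⟩ := exists_cover_of_null (by positivity) hS hε2
  have hc : ∀ i, ∃ c : ℝ, ∀ x ∈ U i, ‖x‖ ∈ Metric.closedBall c (δ i) := fun i => by
    rcases (U i).eq_empty_or_nonempty with h | ⟨y, hy⟩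
    · exact ⟨0, by simp [h]⟩
    · refine ⟨‖y‖, fun x hx => ?_⟩
      rw [Metric.mem_closedBall, Real.dist_eq]
      exact (abs_norm_sub_norm_le x y).trans (by simpa [dist_eq_norm] using hU i x hx y hy)
  choose c hc using hc
  let f : ℝ → ENNReal := fun t =>
    ∑' i, (Metric.closedBall (c i) (δ i)).indicator (fun _ => ENNReal.ofReal (δ i ^ s)) t
  have hmeas : ∀ i, Measurable ((Metric.closedBall (c i) (δ i)).indicator
      (fun _ : ℝ => ENNReal.ofReal (δ i ^ s))) := fun i =>
    measurable_const.indicator Metric.isClosed_closedBall.measurableSet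
  have hf : Measurable f := Measurable.tsum hmeas
  have hint : ∫⁻ t in Icc (1 : ℝ) 2, f t ≤ ε := by
    calc ∫⁻ t in Icc (1 : ℝ) 2, f t ≤ ∫⁻ t, f t := setLIntegral_le_lintegral _ _
      _ = ∑' i, ENNReal.ofReal (δ i ^ s) * volume (Metric.closedBall (c i) (δ i)) := by
          rw [lintegral_tsum fun i => (hmeas i).aemeasurable]
          congr 1; ext i
          rw [lintegral_indicator_const Metric.isClosed_closedBall.measurableSet]
      _ = ∑' i, 2 * ENNReal.ofReal (δ i ^ (s + 1)) := by
          congr 1; ext i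
          have hd := hδ i
          rw [Real.volume_closedBall, ← ENNReal.ofReal_mul (by positivity),
            Real.rpow_add_one hd.ne', ← ENNReal.ofReal_ofNat 2, ← ENNReal.ofReal_mul (by norm_num)]
          congr 1; ring
      _ = 2 * ∑' i, ENNReal.ofReal (δ i ^ (s + 1)) := ENNReal.tsum_mul_left
      _ ≤ 2 * (ε / 2) := by gcongr
      _ ≤ ε := ENNReal.mul_div_le
  obtain ⟨t, ⟨ht1, ht2⟩, htf⟩ := exists_le_setLAverage (μ := volume) (s := Icc (1 : ℝ) 2) (f := f)
    (by simp) (by simp) hf.aemeasurable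
  have hvol : volume (Icc (1 : ℝ) 2) = 1 := by rw [Real.volume_Icc]; norm_num
  rw [setLAverage_eq, hvol, div_one] at htf
  have ht0 : (0 : ℝ) < t := by linarith
  refine ⟨{i : ℕ | t ∈ Metric.closedBall (c i) (δ i)}, inferInstance,
    fun i => {v | t • v ∈ U i}, fun i => δ i, fun i => hδ i, ?_, ?_, ?_⟩
  · rintro ⟨i, _⟩ v hv w hw
    have h1 := hU i _ hv _ hw
    rw [dist_smul₀, Real.norm_eq_abs, abs_of_pos ht0] at h1
    have : 0 ≤ dist v w := dist_nonneg
    change dist v w ≤ δ i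
    nlinarith
  · intro v hv
    obtain ⟨i, hi⟩ := mem_iUnion.1 (hcov ⟨v, hv, t, ht1, ht2, rfl⟩)
    refine mem_iUnion.2 ⟨⟨i, ?_⟩, hi⟩
    have h1 := hc i _ hi
    rwa [norm_smul, hS1 v hv, mul_one, Real.norm_eq_abs, abs_of_pos ht0] at h1
  · calc ∑' i : {i : ℕ | t ∈ Metric.closedBall (c i) (δ i)}, ENNReal.ofReal (δ i ^ s)
        = f t := by
          rw [tsum_subtype {i : ℕ | t ∈ Metric.closedBall (c i) (δ i)}
            (fun i => ENNReal.ofReal (δ i ^ s))]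
          rfl
      _ ≤ ε := htf.trans hint

/-! ### Blow-ups and direction sets -/

theorem mem_dirSet_of_forall_pos {E : Type*} [NormedAddCommGroup E] [NormedSpace ℝ E]
    {A : Set E} {a : E} (ha : ‖a‖ = 1)
    (H : ∀ ε : ℝ, 0 < ε → ∃ x ∈ A \ {0}, ‖x‖ < ε ∧ dist (‖x‖⁻¹ • x) a < ε) : a ∈ dirSet A := by
  choose x hx hx0 hxa using fun i : ℕ => H (1 / ((i : ℝ) + 1)) (by positivity)
  refine ⟨ha, x, hx, ?_, ?_⟩
  · exact squeeze_zero_norm (fun i => (hx0 i).le) tendsto_one_div_add_atTop_nhds_zero_nat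
  · rw [tendsto_iff_dist_tendsto_zero]
    exact squeeze_zero (fun _ => dist_nonneg) (fun i => (hxa i).le)
      tendsto_one_div_add_atTop_nhds_zero_nat

/-- A blow-up limit of a Lipschitz map `g` carries the tangent cone of a set satisfying (SSP) into
the tangent cone of its image: (SSP) replaces the points `(t / (m + 1)) • v` by points of `P` at
distance `o(1 / m)`, an error which `g` preserves and the blow-up does not see. -/
theorem normalize_mem_dirSet_image {E : Type*} [NormedAddCommGroup E] [NormedSpace ℝ E]
    {P : Set E} (hP : SSP P) {g : E → E} {L : ℝ}
    (hg : ∀ x y, ‖g x - g y‖ ≤ L * ‖x - y‖) {v : E} (hv : v ∈ dirSet P) {t : ℝ} (ht : 0 < t)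
    {l : Filter ℕ} [l.NeBot] (hl : l ≤ atTop) {w : E} (hw : w ≠ 0)
    (hlim : Tendsto (fun m : ℕ => ((m : ℝ) + 1) • g (((m : ℝ) + 1)⁻¹ • t • v)) l (𝓝 w)) :
    ‖w‖⁻¹ • w ∈ dirSet (g '' P) := by
  have hv1 : ‖v‖ = 1 := hv.1
  have hv0 : v ≠ 0 := by rintro rfl; simp at hv1
  have hm : ∀ m : ℕ, (0 : ℝ) < (m : ℝ) + 1 := fun m => by positivity
  have hinv : Tendsto (fun m : ℕ => ((m : ℝ) + 1)⁻¹) atTop (𝓝 0) := by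
    simpa only [one_div] using tendsto_one_div_add_atTop_nhds_zero_nat (𝕜 := ℝ)
  have hnorm : ∀ m : ℕ, ‖((m : ℝ) + 1)⁻¹ • t • v‖ = ((m : ℝ) + 1)⁻¹ * t := fun m => by
    rw [norm_smul, norm_smul, hv1, mul_one, Real.norm_of_nonneg (inv_nonneg.2 (hm m).le),
      Real.norm_of_nonneg ht.le]
  obtain ⟨b, hb, hbl⟩ := hP (fun m : ℕ => ((m : ℝ) + 1)⁻¹ • t • v)
    (fun m => smul_ne_zero (inv_ne_zero (hm m).ne') (smul_ne_zero ht.ne' hv0))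
    (by simpa using hinv.smul_const (t • v))
    ⟨v, hv, by
      refine tendsto_const_nhds.congr fun m => ?_
      rw [hnorm, smul_smul, smul_smul, mul_assoc, inv_mul_cancel₀, one_smul]
      exact (mul_pos (inv_pos.2 (hm m)) ht).ne'⟩
  have hdiff : Tendsto (fun m : ℕ => ((m : ℝ) + 1) • g (b m)
      - ((m : ℝ) + 1) • g (((m : ℝ) + 1)⁻¹ • t • v)) atTop (𝓝 0) := by
    refine squeeze_zero_norm (fun m => ?_) (by simpa using hbl.const_mul (L * t))
    have h1 := hg (b m) (((m : ℝ) + 1)⁻¹ • t • v)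
    have := hm m
    rw [← smul_sub, norm_smul, Real.norm_of_nonneg (hm m).le, hnorm, norm_sub_rev _ (b m)]
    calc ((m : ℝ) + 1) * ‖g (b m) - g (((m : ℝ) + 1)⁻¹ • t • v)‖
        ≤ ((m : ℝ) + 1) * (L * ‖b m - ((m : ℝ) + 1)⁻¹ • t • v‖) := by gcongr
      _ = _ := by field_simp
  have hy : Tendsto (fun m : ℕ => ((m : ℝ) + 1) • g (b m)) l (𝓝 w) := by
    simpa using (hdiff.mono_left hl).add hlim
  have hy0 : Tendsto (fun m : ℕ => g (b m)) l (𝓝 0) := by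
    have h := (hinv.mono_left hl).smul hy
    rw [zero_smul] at h
    exact h.congr fun m => inv_smul_smul₀ (hm m).ne' _
  have hyn : Tendsto (fun m : ℕ => ‖g (b m)‖⁻¹ • g (b m)) l (𝓝 (‖w‖⁻¹ • w)) := by
    refine ((hy.norm.inv₀ (norm_ne_zero_iff.2 hw)).smul hy).congr fun m => ?_
    rw [norm_smul, Real.norm_of_nonneg (hm m).le, mul_inv, smul_smul, mul_right_comm,
      inv_mul_cancel₀ (hm m).ne', one_mul]
  refine mem_dirSet_of_forall_pos ?_ fun ε hε => ?_
  · rw [norm_smul, norm_inv, norm_norm, inv_mul_cancel₀ (norm_ne_zero_iff.2 hw)]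
  · obtain ⟨m, h1, h2, h3⟩ := ((hy.eventually_ne hw).and
      ((hy0.norm.eventually_lt_const (by simpa using hε)).and
        (hyn.eventually (Metric.ball_mem_nhds _ hε)))).exists
    exact ⟨g (b m), ⟨⟨b m, hb m, rfl⟩, fun h => h1 (by rw [mem_singleton_iff.1 h, smul_zero])⟩,
      h2, h3⟩

/-- Ultrafilter limits of the rescalings `(m + 1) • g (x / (m + 1))` give a blow-up of `g` at `0`
with the same bi-Lipschitz constants. -/
theorem exists_blowup {E : Type*} [NormedAddCommGroup E] [NormedSpace ℝ E] [ProperSpace E]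
    {g : E → E} {L : ℝ} (g0 : g 0 = 0)
    (hg : ∀ x y, (1 / L) * ‖x - y‖ ≤ ‖g x - g y‖ ∧ ‖g x - g y‖ ≤ L * ‖x - y‖) :
    ∃ G : E → E, (∀ x, Tendsto (fun m : ℕ => ((m : ℝ) + 1) • g (((m : ℝ) + 1)⁻¹ • x))
        (hyperfilter ℕ) (𝓝 (G x))) ∧
      G 0 = 0 ∧ ∀ x y, (1 / L) * ‖x - y‖ ≤ ‖G x - G y‖ ∧ ‖G x - G y‖ ≤ L * ‖x - y‖ := by
  have hm : ∀ m : ℕ, (0 : ℝ) < (m : ℝ) + 1 := fun m => by positivity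
  have hscale : ∀ (c : ℝ) (m : ℕ) (x y : E), ((m : ℝ) + 1) *
      (c * ‖((m : ℝ) + 1)⁻¹ • x - ((m : ℝ) + 1)⁻¹ • y‖) = c * ‖x - y‖ := fun c m x y => by
    have := hm m
    rw [← smul_sub, norm_smul, Real.norm_of_nonneg (inv_nonneg.2 (hm m).le)]
    field_simp
  have hbd : ∀ (m : ℕ) (x y : E),
      (1 / L) * ‖x - y‖ ≤
        ‖((m : ℝ) + 1) • g (((m : ℝ) + 1)⁻¹ • x) - ((m : ℝ) + 1) • g (((m : ℝ) + 1)⁻¹ • y)‖ ∧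
      ‖((m : ℝ) + 1) • g (((m : ℝ) + 1)⁻¹ • x) - ((m : ℝ) + 1) • g (((m : ℝ) + 1)⁻¹ • y)‖
        ≤ L * ‖x - y‖ := fun m x y => by
    have h := hg (((m : ℝ) + 1)⁻¹ • x) (((m : ℝ) + 1)⁻¹ • y)
    have := (hm m).le
    rw [← smul_sub, norm_smul, Real.norm_of_nonneg this]
    constructor
    · exact (hscale _ m x y).symm.trans_le (mul_le_mul_of_nonneg_left h.1 this)
    · exact (mul_le_mul_of_nonneg_left h.2 this).trans_eq (hscale _ m x y)
  have hex : ∀ x, ∃ y, Tendsto (fun m : ℕ => ((m : ℝ) + 1) • g (((m : ℝ) + 1)⁻¹ • x))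
      (hyperfilter ℕ) (𝓝 y) := fun x => by
    obtain ⟨y, -, hy⟩ := (isCompact_closedBall (0 : E) (L * ‖x‖)).ultrafilter_le_nhds'
      ((hyperfilter ℕ).map fun m : ℕ => ((m : ℝ) + 1) • g (((m : ℝ) + 1)⁻¹ • x))
      (Ultrafilter.mem_map.2 (univ_mem' fun m => by
        have h := (hbd m x 0).2
        simpa [g0] using h))
    exact ⟨y, hy⟩
  choose G hG using hex
  refine ⟨G, hG, ?_, fun x y => ?_⟩
  · have h := hG 0
    simp only [smul_zero, g0] at h
    exact tendsto_nhds_unique h tendsto_const_nhds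
  · have h := ((hG x).sub (hG y)).norm
    exact ⟨ge_of_tendsto' h fun m => (hbd m x y).1, le_of_tendsto' h fun m => (hbd m x y).2⟩

open MeasureTheory Measure in
/-- One inequality of the theorem, for a bi-Lipschitz `g` that need not be surjective; (SSP) is only
needed for the source sets. -/
theorem dimH_dirSet_inter_le {E : Type*} [NormedAddCommGroup E] [NormedSpace ℝ E] [ProperSpace E]
    {g : E → E} {L : ℝ} (hL : 1 ≤ L) (g0 : g 0 = 0)
    (hg : ∀ x y, (1 / L) * ‖x - y‖ ≤ ‖g x - g y‖ ∧ ‖g x - g y‖ ≤ L * ‖x - y‖)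
    {P Q : Set E} (hP : SSP P) (hQ : SSP Q) :
    dimH (dirSet P ∩ dirSet Q) ≤ dimH (dirSet (g '' P) ∩ dirSet (g '' Q)) := by
  borelize E
  have hLpos : 0 < L := by linarith
  obtain ⟨G, hG, hG0, hGbil⟩ := exists_blowup g0 hg
  have hanti : AntilipschitzWith L.toNNReal G := AntilipschitzWith.of_le_mul_dist fun x y => by
    have h := (hGbil x y).1
    rw [Real.coe_toNNReal _ hLpos.le, dist_eq_norm, dist_eq_norm]
    rw [one_div, inv_mul_le_iff₀ hLpos] at h
    exact h
  refine ENNReal.le_of_forall_pos_nnreal_lt fun s hs hslt => ?_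
  have hs' : (0 : ℝ) < s := hs
  by_contra! hlt
  set S' := dirSet (g '' P) ∩ dirSet (g '' Q)
  have hcone : μH[(s : ℝ) + 1] (⋃ N : ℕ, {x : E | ∃ v ∈ S', ∃ r : ℝ, 0 ≤ r ∧ r ≤ N ∧ x = r • v})
      = 0 :=
    measure_iUnion_null fun N =>
      null_truncated_cone hs' (fun v hv => hv.1.1) (hausdorffMeasure_of_dimH_lt hlt) N.cast_nonneg
  have hann : μH[(s : ℝ) + 1]
      {x : E | ∃ v ∈ dirSet P ∩ dirSet Q, ∃ t : ℝ, 1 ≤ t ∧ t ≤ 2 ∧ x = t • v} = 0 := by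
    refine le_antisymm ((hanti.le_hausdorffMeasure_image (by positivity) _).trans ?_) zero_le
    rw [measure_mono_null ?_ hcone, mul_zero]
    rintro _ ⟨_, ⟨v, hv, t, ht1, -, rfl⟩, rfl⟩
    have ht : 0 < t := by linarith
    have hG1 : G (t • v) ≠ 0 := fun h0 => by
      have h1 := hanti.injective (h0.trans hG0.symm)
      have h2 : ‖t • v‖ = t := by rw [norm_smul, hv.1.1, mul_one, Real.norm_of_nonneg ht.le]
      rw [h1, norm_zero] at h2
      linarith
    obtain ⟨N, hN⟩ := exists_nat_ge ‖G (t • v)‖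
    have hl : (hyperfilter ℕ : Filter ℕ) ≤ atTop := Nat.hyperfilter_le_atTop
    exact mem_iUnion.2 ⟨N, ‖G (t • v)‖⁻¹ • G (t • v),
      ⟨normalize_mem_dirSet_image hP (fun x y => (hg x y).2) hv.1 ht hl hG1 (hG _),
        normalize_mem_dirSet_image hQ (fun x y => (hg x y).2) hv.2 ht hl hG1 (hG _)⟩,
      ‖G (t • v)‖, norm_nonneg _, hN, (smul_inv_smul₀ (norm_ne_zero_iff.2 hG1) _).symm⟩
  have hnull := null_of_null_annular_cone hs' (fun v hv => hv.1.1) hann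
  rw [hausdorffMeasure_of_lt_dimH hslt] at hnull
  exact ENNReal.top_ne_zero hnull

/-- if `A`, `B`, `h(A)`, `h(B)` all satisfy (SSP) at `0` and `h` is a
bi-Lipschitz homeomorphism of `ℝⁿ` fixing `0`, then
`dim_H(D(h(A)) ∩ D(h(B))) = dim_H(D(A) ∩ D(B))`. -/
theorem dimH_dirSet_inter_eq {n : ℕ} (A B : Set (EuclideanSpace ℝ (Fin n)))
    (hA : (0 : EuclideanSpace ℝ (Fin n)) ∈ closure A)
    (hB : (0 : EuclideanSpace ℝ (Fin n)) ∈ closure B)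
    (h : EuclideanSpace ℝ (Fin n) → EuclideanSpace ℝ (Fin n))
    (L : ℝ) (hL : 1 ≤ L) (h0 : h 0 = 0) (hsurj : Function.Surjective h)
    (hbil : ∀ x y, (1 / L) * ‖x - y‖ ≤ ‖h x - h y‖ ∧ ‖h x - h y‖ ≤ L * ‖x - y‖)
    (hsspA : SSP A) (hsspB : SSP B)
    (hsspA' : SSP (h '' A)) (hsspB' : SSP (h '' B)) :
    dimH (dirSet (h '' A) ∩ dirSet (h '' B)) = dimH (dirSet A ∩ dirSet B) := by
  have hLpos : 0 < L := by linarith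
  have hinj : Function.Injective h := fun x y hxy => by
    have h1 := (hbil x y).1
    rw [hxy, sub_self, norm_zero, one_div, inv_mul_le_iff₀ hLpos, mul_zero] at h1
    exact sub_eq_zero.1 (norm_le_zero_iff.1 h1)
  obtain ⟨k, hkl, hkr⟩ := Function.bijective_iff_has_inverse.1 ⟨hinj, hsurj⟩
  have hk0 : k 0 = 0 := by rw [← h0, hkl, h0]
  have hkbil : ∀ x y, (1 / L) * ‖x - y‖ ≤ ‖k x - k y‖ ∧ ‖k x - k y‖ ≤ L * ‖x - y‖ := fun x y => by
    have h1 := hbil (k x) (k y)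
    rw [hkr, hkr, one_div, inv_mul_le_iff₀ hLpos] at h1
    rw [one_div, inv_mul_le_iff₀ hLpos]
    exact h1.symm
  refine le_antisymm ?_ (dimH_dirSet_inter_le hL h0 hbil hsspA hsspB)
  have h1 := dimH_dirSet_inter_le hL hk0 hkbil hsspA' hsspB'
  rwa [hkl.image_image, hkl.image_image] at h1
end
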